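/- arXiv:2410.23131 — 2 statements merged into one kernel-verified Lean document; each statement's English description precedes it below -/
import Mathlib

section
/- Let I and P be positive integers, and let η, L > 0 satisfy η ≤ 1/(60·L·I·P); set q₁ = 18·η²·L²·I and q₂ = 15·η²·L²·I·P. Let a₀,…,a_{P−1} and b₀,…,b_{P−1} be nonnegative reals (with the convention a_s = b_s = 0 for s ≥ P). Suppose d, m : {0,…,I·P} → [0,∞) satisfy d₀ = m₀ = 0, d_t = 0 whenever k_t = 0, and for every 1 ≤ t ≤ I·P: m_t ≤ (1 + 1/(I·P))·m_{t−1} + q₂·d_{t−1} + b_{r_{t−1}}, and if k_t ≠ 0 then d_t ≤ (1 + 1/I)·d_{t−1} + q₁·m_{t−1} + a_{r_{t−1}}. Then for every 0 ≤ t ≤ I·P: m_t ≤ 7·I·Σ_{s=0}^{r_t} b_s + 12·q₂·I²·Σ_{s=0}^{r_t} a_s. -/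
open Finset

/-!
Suppose `m` has stayed below the claimed bound `S` before time `t`. Within a round the growth
factor is at most `e ≤ 3`, so the recursion for `d` gives `d s ≤ 3 I (a (s / I) + q₁ S (s / I))`
for `s < t`. Feeding this into the recursion for `m`, whose growth factor over the whole horizon is
again at most `3`, gives `m t ≤ 3 I ∑ b + 9 q₂ I² ∑ a + 9 I t q₁ q₂ S (t / I)`. When
`I t q₁ q₂ ≤ 1 / 36` the last term is at most a quarter of `S (t / I)`, and the constants `7` and
`12` of `S` leave room for the rest.
-/

lemma discrete_gronwall_of_lt {u b c : ℕ → ℝ} {n : ℕ} (hu₀ : 0 ≤ u 0)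
    (hu : ∀ k < n, u (k + 1) ≤ (1 + c k) * u k + b k) (hc : ∀ k, 0 ≤ c k) (hb : ∀ k, 0 ≤ b k) :
    u n ≤ (u 0 + ∑ k ∈ range n, b k) * Real.exp (∑ k ∈ range n, c k) := by
  -- Freezing the positive part at time `n` extends the recursion to all times.
  let v : ℕ → ℝ := fun k ↦ max (u (min k n)) 0
  have hv₀ : v 0 = u 0 := by simp [v, hu₀]
  have hv : ∀ k ≥ 0, v (k + 1) ≤ (1 + c k) * v k + b k := by
    intro k _
    have hvk : 0 ≤ v k := le_max_right _ _
    have hstep : 0 ≤ (1 + c k) * v k + b k := by have := hc k; have := hb k; positivity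
    refine max_le ?_ hstep
    rcases lt_or_ge k n with hk | hk
    · have huv : u k ≤ v k := by simp [v, hk.le]
      rw [min_eq_left (Nat.succ_le_of_lt hk)]
      exact (hu k hk).trans (by have := hc k; gcongr)
    · have huv : u n ≤ v k := by simp [v, hk]
      rw [min_eq_right (by omega)]
      linarith [hc k, hb k, mul_nonneg (hc k) hvk]
  calc u n ≤ v n := by simp [v]
    _ ≤ (v 0 + ∑ k ∈ Ico 0 n, b k) * Real.exp (∑ k ∈ Ico 0 n, c k) :=
        discrete_gronwall (hv₀ ▸ hu₀) hv (fun k _ ↦ hc k) (fun k _ ↦ hb k) n.zero_le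
    _ = (u 0 + ∑ k ∈ range n, b k) * Real.exp (∑ k ∈ range n, c k) := by
        rw [hv₀, range_eq_Ico]

lemma le_three_mul_sum_of_le_one_add_mul_add {u b : ℕ → ℝ} {c : ℝ} {n : ℕ} (hu₀ : u 0 = 0)
    (hu : ∀ k < n, u (k + 1) ≤ (1 + c) * u k + b k) (hc : 0 ≤ c) (hnc : n * c ≤ 1)
    (hb : ∀ k, 0 ≤ b k) :
    u n ≤ 3 * ∑ k ∈ range n, b k := by
  have hexp : Real.exp (n * c) ≤ 3 :=
    (Real.exp_le_exp.2 hnc).trans Real.exp_one_lt_three.le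
  have hsum : 0 ≤ ∑ k ∈ range n, b k := sum_nonneg fun k _ ↦ hb k
  calc u n ≤ (∑ k ∈ range n, b k) * Real.exp (n * c) := by
        simpa [hu₀] using discrete_gronwall_of_lt hu₀.ge hu (fun _ ↦ hc) hb
    _ ≤ (∑ k ∈ range n, b k) * 3 := by gcongr
    _ = 3 * ∑ k ∈ range n, b k := mul_comm _ _

lemma sum_range_mul_comp_div {M : Type*} [AddCommMonoid M] {I : ℕ} (hI : 0 < I) (f : ℕ → M)
    (n : ℕ) :
    ∑ j ∈ range (I * n), f (j / I) = I • ∑ s ∈ range n, f s := by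
  induction n with
  | zero => simp
  | succ n ih =>
    have hround : ∑ k ∈ range I, f ((I * n + k) / I) = I • f n := by
      conv_rhs => rw [← card_range I]
      refine sum_eq_card_nsmul fun k hk ↦ ?_
      rw [Nat.mul_add_div hI, Nat.div_eq_of_lt (mem_range.1 hk), add_zero]
    rw [mul_add_one, sum_range_add, ih, hround, sum_range_succ, nsmul_add]

lemma sum_range_comp_div_le {M : Type*} [AddCommMonoid M] [PartialOrder M] [IsOrderedAddMonoid M]
    {I : ℕ} (hI : 0 < I) {f : ℕ → M} (hf : ∀ s, 0 ≤ f s) (t : ℕ) :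
    ∑ j ∈ range t, f (j / I) ≤ I • ∑ s ∈ range (t / I + 1), f s := by
  rw [← sum_range_mul_comp_div hI]
  refine sum_le_sum_of_subset_of_nonneg (range_subset_range.2 ?_) fun j _ _ ↦ hf _
  exact (Nat.lt_mul_div_succ t hI).le

lemma le_three_mul_of_round_recursion {I t : ℕ} (hI : 0 < I) {d f : ℕ → ℝ} (hf : 0 ≤ f (t / I))
    (hreset : ∀ s ≤ t, s % I = 0 → d s = 0)
    (hrec : ∀ s < t, (s + 1) % I ≠ 0 → d (s + 1) ≤ (1 + 1 / (I : ℝ)) * d s + f (s / I)) :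
    d t ≤ 3 * (I * f (t / I)) := by
  have ht : I * (t / I) + t % I = t := Nat.div_add_mod t I
  have hmod : t % I < I := Nat.mod_lt t hI
  have hmod_le : ((t % I : ℕ) : ℝ) ≤ I := by exact_mod_cast hmod.le
  have hstep : ∀ k < t % I, d (I * (t / I) + (k + 1)) ≤
      (1 + 1 / (I : ℝ)) * d (I * (t / I) + k) + f (t / I) := by
    intro k hk
    have hmod_ne : (I * (t / I) + k + 1) % I ≠ 0 := by
      rw [add_assoc, Nat.mul_add_mod, Nat.mod_eq_of_lt (by omega)]
      exact k.succ_ne_zero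
    have hdiv : (I * (t / I) + k) / I = t / I := by
      rw [Nat.mul_add_div hI, Nat.div_eq_of_lt (hk.trans hmod), add_zero]
    simpa only [hdiv, add_assoc] using hrec (I * (t / I) + k) (by omega) hmod_ne
  have hgronwall := le_three_mul_sum_of_le_one_add_mul_add (u := fun k ↦ d (I * (t / I) + k))
    (hreset _ (by omega) (Nat.mul_mod_right _ _)) hstep (by positivity)
    (by rw [mul_one_div]; exact div_le_one_of_le₀ hmod_le I.cast_nonneg) fun _ ↦ hf
  rw [ht, sum_const, card_range, nsmul_eq_mul] at hgronwall
  exact hgronwall.trans (by gcongr)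

/-- The bound to be proved for `m` throughout round `r` of length `I`, where `q` is the coefficient
of `d` in the recursion for `m`. -/
noncomputable def roundBound (I : ℕ) (q : ℝ) (a b : ℕ → ℝ) (r : ℕ) : ℝ :=
  7 * I * ∑ s ∈ range (r + 1), b s + 12 * q * I ^ 2 * ∑ s ∈ range (r + 1), a s

section RoundBound

variable {I : ℕ} {q₁ q₂ : ℝ} {a b : ℕ → ℝ}

lemma roundBound_nonneg (hq₂ : 0 ≤ q₂) (ha : ∀ s, 0 ≤ a s) (hb : ∀ s, 0 ≤ b s) (r : ℕ) :
    0 ≤ roundBound I q₂ a b r := by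
  have hA : 0 ≤ ∑ s ∈ range (r + 1), a s := sum_nonneg fun s _ ↦ ha s
  have hB : 0 ≤ ∑ s ∈ range (r + 1), b s := sum_nonneg fun s _ ↦ hb s
  unfold roundBound
  positivity

lemma roundBound_mono (hq₂ : 0 ≤ q₂) (ha : ∀ s, 0 ≤ a s) (hb : ∀ s, 0 ≤ b s) :
    Monotone (roundBound I q₂ a b) := by
  intro r r' hr
  have hsub : range (r + 1) ⊆ range (r' + 1) := range_subset_range.2 (by omega)
  unfold roundBound
  gcongr
  exacts [fun s _ _ ↦ hb s, fun s _ _ ↦ ha s]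

lemma three_mul_sum_le_roundBound (hI : 0 < I) (hq₁ : 0 ≤ q₁) (hq₂ : 0 ≤ q₂)
    (ha : ∀ s, 0 ≤ a s) (hb : ∀ s, 0 ≤ b s) {t : ℕ} (hq : I * t * q₁ * q₂ ≤ 1 / 36) :
    3 * ∑ j ∈ range t,
      (q₂ * (3 * (I * (a (j / I) + q₁ * roundBound I q₂ a b (j / I)))) + b (j / I))
      ≤ roundBound I q₂ a b (t / I) := by
  set S := roundBound I q₂ a b
  set A := ∑ s ∈ range (t / I + 1), a s
  set B := ∑ s ∈ range (t / I + 1), b s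
  have hsumS : ∑ j ∈ range t, S (j / I) ≤ t * S (t / I) := by
    simpa only [card_range, nsmul_eq_mul] using sum_le_card_nsmul _ _ _ fun j hj ↦
      roundBound_mono hq₂ ha hb (Nat.div_le_div_right (mem_range.1 hj).le)
  have hfeedback : 9 * (I * t * q₁ * q₂) * S (t / I) ≤ 1 / 4 * S (t / I) := by
    have := roundBound_nonneg (I := I) hq₂ ha hb (t / I)
    gcongr
    linarith
  have hsum_le : ∀ f : ℕ → ℝ, (∀ s, 0 ≤ f s) →
      ∑ j ∈ range t, f (j / I) ≤ I * ∑ s ∈ range (t / I + 1), f s := fun f hf ↦ by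
    simpa only [nsmul_eq_mul] using sum_range_comp_div_le hI hf t
  calc 3 * ∑ j ∈ range t, (q₂ * (3 * (I * (a (j / I) + q₁ * S (j / I)))) + b (j / I))
      = 9 * q₂ * I * ∑ j ∈ range t, a (j / I) + 9 * q₂ * I * q₁ * ∑ j ∈ range t, S (j / I)
          + 3 * ∑ j ∈ range t, b (j / I) := by
        simp only [mul_sum, ← sum_add_distrib]
        exact sum_congr rfl fun j _ ↦ by ring
    _ ≤ 9 * q₂ * I * (I * A) + 9 * q₂ * I * q₁ * (t * S (t / I)) + 3 * (I * B) := by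
        gcongr
        exacts [hsum_le a ha, hsum_le b hb]
    _ = 9 * q₂ * I ^ 2 * A + 9 * (I * t * q₁ * q₂) * S (t / I) + 3 * I * B := by ring
    _ ≤ S (t / I) := by
        have hS_eq : S (t / I) = 7 * I * B + 12 * q₂ * I ^ 2 * A := rfl
        have hIB : 0 ≤ I * B := mul_nonneg I.cast_nonneg (sum_nonneg fun s _ ↦ hb s)
        linarith

end RoundBound

lemma coupling_le_of_step_size_le {I P η L : ℝ} (hI : 0 < I) (hP : 1 ≤ P) (hη : 0 ≤ η)
    (hL : 0 < L) (hηle : η ≤ 1 / (60 * L * I * P)) :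
    I * (I * P) * (18 * η ^ 2 * L ^ 2 * I) * (15 * η ^ 2 * L ^ 2 * I * P) ≤ 1 / 36 := by
  have hstep : η * L * I * P ≤ 1 / 60 := by
    rw [le_div_iff₀ (by positivity)] at hηle
    linarith
  calc I * (I * P) * (18 * η ^ 2 * L ^ 2 * I) * (15 * η ^ 2 * L ^ 2 * I * P)
      = 270 * (η * L * I) ^ 4 * P ^ 2 := by ring
    _ ≤ 270 * (η * L * I) ^ 4 * P ^ 4 := by gcongr; norm_num
    _ = 270 * (η * L * I * P) ^ 4 := by ring
    _ ≤ 270 * (1 / 60) ^ 4 := by gcongr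
    _ ≤ 1 / 36 := by norm_num

theorem drift_recursion_bound_m_general {I N : ℕ} (hI : 0 < I) {q₁ q₂ : ℝ}
    (hq₁ : 0 ≤ q₁) (hq₂ : 0 ≤ q₂) (hq : I * N * q₁ * q₂ ≤ 1 / 36) {a b d m : ℕ → ℝ}
    (ha : ∀ s, 0 ≤ a s) (hb : ∀ s, 0 ≤ b s) (hm₀ : m 0 = 0)
    (hreset : ∀ t ≤ N, t % I = 0 → d t = 0)
    (hmrec : ∀ t < N, m (t + 1) ≤ (1 + 1 / (N : ℝ)) * m t + q₂ * d t + b (t / I))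
    (hdrec : ∀ t < N, (t + 1) % I ≠ 0 →
      d (t + 1) ≤ (1 + 1 / (I : ℝ)) * d t + q₁ * m t + a (t / I)) :
    ∀ t ≤ N, m t ≤ 7 * I * ∑ s ∈ range (t / I + 1), b s
      + 12 * q₂ * I ^ 2 * ∑ s ∈ range (t / I + 1), a s := by
  intro t
  induction t using Nat.strong_induction_on with
  | h t ih =>
    intro ht
    set S := roundBound I q₂ a b
    have hforce : ∀ r, 0 ≤ a r + q₁ * S r := fun r ↦
      add_nonneg (ha r) (mul_nonneg hq₁ (roundBound_nonneg hq₂ ha hb r))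
    have hdstep : ∀ j < t, (j + 1) % I ≠ 0 →
        d (j + 1) ≤ (1 + 1 / (I : ℝ)) * d j + (a (j / I) + q₁ * S (j / I)) := fun j hj hmod ↦ by
      have hmS : q₁ * m j ≤ q₁ * S (j / I) := mul_le_mul_of_nonneg_left (ih j hj (by omega)) hq₁
      linarith [hdrec j (by omega) hmod]
    have hd : ∀ j < t, d j ≤ 3 * (I * (a (j / I) + q₁ * S (j / I))) := fun j hj ↦
      le_three_mul_of_round_recursion (f := fun r ↦ a r + q₁ * S r) hI (hforce _)
        (fun i hi ↦ hreset i (by omega)) fun i hi ↦ hdstep i (by omega)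
    have hm : m t ≤ 3 * ∑ j ∈ range t,
        (q₂ * (3 * (I * (a (j / I) + q₁ * S (j / I)))) + b (j / I)) := by
      refine le_three_mul_sum_of_le_one_add_mul_add hm₀ (fun j hj ↦ ?_) (c := 1 / (N : ℝ))
        (by positivity) ?_ fun j ↦ ?_
      · linarith [hmrec j (by omega), mul_le_mul_of_nonneg_left (hd j hj) hq₂]
      · rw [mul_one_div]
        exact div_le_one_of_le₀ (by exact_mod_cast ht) N.cast_nonneg
      · have := hforce (j / I)
        have := hb (j / I)
        positivity
    have hqt : I * t * q₁ * q₂ ≤ 1 / 36 := hq.trans' (by gcongr)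
    exact hm.trans (three_mul_sum_le_roundBound hI hq₁ hq₂ ha hb hqt)

/-- Unrolled recursion bound on the client-drift quantity `d` from the proof of
Lemma 1 (Amplified SCAFFOLD).  Here `r_t = t / I` and `k_t = t % I`. -/
theorem drift_recursion_bound_m
    (I P : ℕ) (hI : 0 < I) (hP : 0 < P)
    (η L : ℝ) (hη : 0 < η) (hL : 0 < L)
    (hηle : η ≤ 1 / (60 * L * I * P))
    (q₁ q₂ : ℝ)
    (hq₁ : q₁ = 18 * η ^ 2 * L ^ 2 * I)
    (hq₂ : q₂ = 15 * η ^ 2 * L ^ 2 * I * P)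
    (a b : ℕ → ℝ)
    (ha0 : ∀ s, 0 ≤ a s) (hb0 : ∀ s, 0 ≤ b s)
    (haP : ∀ s, P ≤ s → a s = 0) (hbP : ∀ s, P ≤ s → b s = 0)
    (d m : ℕ → ℝ)
    (hd0 : ∀ t, t ≤ I * P → 0 ≤ d t) (hm0 : ∀ t, t ≤ I * P → 0 ≤ m t)
    (hdinit : d 0 = 0) (hminit : m 0 = 0)
    (hdk : ∀ t, t ≤ I * P → t % I = 0 → d t = 0)
    (hmrec : ∀ t, 1 ≤ t → t ≤ I * P →
      m t ≤ (1 + 1 / ((I : ℝ) * P)) * m (t - 1) + q₂ * d (t - 1) + b ((t - 1) / I))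
    (hdrec : ∀ t, 1 ≤ t → t ≤ I * P → t % I ≠ 0 →
      d t ≤ (1 + 1 / (I : ℝ)) * d (t - 1) + q₁ * m (t - 1) + a ((t - 1) / I)) :
    ∀ t, t ≤ I * P →
      m t ≤ 7 * I * ∑ s ∈ Finset.range (t / I + 1), b s
        + 12 * q₂ * I ^ 2 * ∑ s ∈ Finset.range (t / I + 1), a s := by
  subst hq₁ hq₂
  have hq := coupling_le_of_step_size_le (Nat.cast_pos.2 hI) (Nat.one_le_cast.2 hP) hη.le hL hηle
  exact drift_recursion_bound_m_general (N := I * P) hI (by positivity) (by positivity)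
    (by exact_mod_cast hq) ha0 hb0 hminit hdk
    (fun t ht ↦ by simpa using hmrec (t + 1) (by omega) ht)
    (fun t ht ↦ hdrec (t + 1) (by omega) ht)
end

section
/- Let I and P be positive integers, let η, L > 0 satisfy η ≤ 1/(60·L·I·P), and set q₁ = 18·η²·L²·I and q₂ = 15·η²·L²·I·P. Fix an integer s with 0 ≤ s ≤ P−1 and define α_{s,t} for s·I ≤ t ≤ I·P by: α_{s,t} = 0 whenever t is a multiple of I, and for t with t+1 not a multiple of I, α_{s,t+1} = (1 + 1/I)·α_{s,t} + q₁·P·((1 + 1/(I·P))^{j(s,t)} − 1)·(1 + 1/(I·P))^{ℓ(s,t)} + q₁·q₂·Σ_{i=0}^{t−s·I−2} (1 + 1/(I·P))^i·α_{s,t−1−i} (empty sums being zero). Then α_{s,t} ≤ 36·q₁·I·P for all s·I ≤ t ≤ I·P. -/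
open Finset

/-!
Inside a block of length `I` the coefficient obeys `α (t + 1) ≤ (1 + 1 / I) * α t + c`, and it is
reset to zero at the start of every block, so by a discrete Grönwall argument it never exceeds
`c * I * ((1 + 1 / I) ^ I - 1) ≤ 2 * c * I`. The forcing term is at most `3 * q₁`, because its two
powers of `1 + 1 / (I * P)` have total exponent at most `I * P`. If the bound `8 * q₁ * I` holds
up to time `t`, then the memory term is at most `q₁` when `q₁ * q₂` is small, so `c = 4 * q₁` is
admissible and the bound propagates to time `t + 1`.
-/

lemma mod_add_one_of_not_dvd {n t : ℕ} (h : ¬ n ∣ t + 1) : (t + 1) % n = t % n + 1 := by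
  have hdiv : (t + 1) / n = t / n := Nat.succ_div_of_not_dvd h
  have h_succ := Nat.div_add_mod (t + 1) n
  have h_cur := Nat.div_add_mod t n
  rw [hdiv] at h_succ
  lia

section OrderedRing

variable {R : Type*} [CommRing R] [PartialOrder R] [IsOrderedRing R]

lemma pow_sub_one_le_mul_pow {y : R} (hy : 1 ≤ y) (n : ℕ) :
    y ^ n - 1 ≤ n * y ^ n * (y - 1) := by
  have geom_sum_le : ∑ i ∈ range n, y ^ i ≤ n * y ^ n := by
    simpa using sum_le_card_nsmul (range n) (y ^ ·) (y ^ n) fun i hi =>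
      pow_le_pow_right₀ hy (mem_range.1 hi).le
  rw [← geom_sum_mul]
  exact mul_le_mul_of_nonneg_right geom_sum_le (sub_nonneg.2 hy)

/-- The additive error is written `c * x` so that `c * ((1 + x) ^ k - 1)` solves the recursion
exactly. -/
lemma le_mul_pow_mod_sub_one_of_reset {u : ℕ → R} {x c : R} {n a b : ℕ} (hx : 0 ≤ 1 + x)
    (ha : n ∣ a) (hreset : ∀ t, a ≤ t → t ≤ b → n ∣ t → u t ≤ 0)
    (hstep : ∀ t, a ≤ t → t + 1 ≤ b → ¬ n ∣ t + 1 → u (t + 1) ≤ (1 + x) * u t + c * x)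
    {t : ℕ} (hat : a ≤ t) (htb : t ≤ b) :
    u t ≤ c * ((1 + x) ^ (t % n) - 1) := by
  have of_dvd : ∀ t, a ≤ t → t ≤ b → n ∣ t → u t ≤ c * ((1 + x) ^ (t % n) - 1) :=
    fun t hat htb hdvd => by simpa [Nat.mod_eq_zero_of_dvd hdvd] using hreset t hat htb hdvd
  induction t, hat using Nat.le_induction with
  | base => exact of_dvd a le_rfl htb ha
  | succ t hat ih =>
    by_cases hdvd : n ∣ t + 1
    · exact of_dvd (t + 1) (by lia) htb hdvd
    calc u (t + 1) ≤ (1 + x) * u t + c * x := hstep t hat htb hdvd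
      _ ≤ (1 + x) * (c * ((1 + x) ^ (t % n) - 1)) + c * x := by gcongr; exact ih (by lia)
      _ = c * ((1 + x) ^ ((t + 1) % n) - 1) := by rw [mod_add_one_of_not_dvd hdvd]; ring

end OrderedRing

lemma one_add_one_div_pow_le_three {x : ℝ} {k : ℕ} (hk : k ≤ x) : (1 + 1 / x) ^ k ≤ 3 := by
  have hx : 0 ≤ x := k.cast_nonneg.trans hk
  calc (1 + 1 / x) ^ k ≤ Real.exp (1 / x) ^ k := by
        gcongr
        rw [add_comm]
        exact Real.add_one_le_exp _
    _ = Real.exp (k / x) := by rw [← Real.exp_nat_mul, mul_one_div]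
    _ ≤ Real.exp 1 := Real.exp_le_exp.2 (div_le_one_of_le₀ hk hx)
    _ ≤ 3 := Real.exp_one_lt_three.le

lemma mul_pow_sub_one_mul_pow_le_three {I P j l : ℕ} (hj : j ≤ I) (hjl : j + l ≤ I * P) :
    P * ((1 + 1 / ((I : ℝ) * P)) ^ j - 1) * (1 + 1 / ((I : ℝ) * P)) ^ l ≤ 3 := by
  set y : ℝ := 1 + 1 / ((I : ℝ) * P) with hy
  have hy1 : 1 ≤ y := le_add_of_nonneg_right (by positivity)
  calc P * (y ^ j - 1) * y ^ l ≤ P * (j * y ^ j * (y - 1)) * y ^ l := by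
        gcongr
        exact pow_sub_one_le_mul_pow hy1 j
    _ ≤ P * (I * y ^ j * (y - 1)) * y ^ l := by gcongr
    _ = ((I : ℝ) * P / (I * P)) * y ^ (j + l) := by rw [hy]; ring
    _ ≤ 1 * 3 := by
        gcongr
        · exact div_self_le_one _
        · exact one_add_one_div_pow_le_three (by exact_mod_cast hjl)
    _ = 3 := one_mul 3

lemma sum_one_add_one_div_pow_mul_le {v : ℕ → ℝ} {x M : ℝ} {k : ℕ} (hk : k ≤ x) (hM : 0 ≤ M)
    (hv : ∀ i < k, v i ≤ M) :
    ∑ i ∈ range k, (1 + 1 / x) ^ i * v i ≤ x * (3 * M) := by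
  have hx : 0 ≤ x := k.cast_nonneg.trans hk
  have term_le : ∀ i ∈ range k, (1 + 1 / x) ^ i * v i ≤ 3 * M := fun i hi => by
    have hik := mem_range.1 hi
    have pow_le_three : (1 + 1 / x) ^ i ≤ 3 :=
      one_add_one_div_pow_le_three ((Nat.cast_le.2 hik.le).trans hk)
    calc (1 + 1 / x) ^ i * v i ≤ (1 + 1 / x) ^ i * M := by gcongr; exact hv i hik
      _ ≤ 3 * M := by gcongr
  calc ∑ i ∈ range k, (1 + 1 / x) ^ i * v i ≤ k * (3 * M) := by
        simpa using sum_le_card_nsmul _ _ _ term_le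
    _ ≤ x * (3 * M) := by gcongr

theorem alpha_coefficient_bound_general {I P : ℕ} (hI : 0 < I) {q₁ q₂ : ℝ} (hq₁ : 0 ≤ q₁)
    (hq₂ : 0 ≤ q₂) (hq : 24 * (q₁ * q₂) * I ^ 2 * P ≤ 1) {s : ℕ} {α : ℕ → ℝ}
    (hα0 : ∀ t, s * I ≤ t → t ≤ I * P → I ∣ t → α t ≤ 0)
    (hαrec : ∀ t, s * I ≤ t → t + 1 ≤ I * P → ¬ I ∣ (t + 1) →
      α (t + 1) ≤ (1 + 1 / (I : ℝ)) * α t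
        + q₁ * P * ((1 + 1 / ((I : ℝ) * P)) ^ (min I (t - s * I)) - 1)
            * (1 + 1 / ((I : ℝ) * P)) ^ (t - (s + 1) * I)
        + q₁ * q₂ * ∑ i ∈ range (t - s * I - 1),
            (1 + 1 / ((I : ℝ) * P)) ^ i * α (t - 1 - i))
    {t : ℕ} (hst : s * I ≤ t) (htP : t ≤ I * P) : α t ≤ 8 * q₁ * I := by
  have step : ∀ r, s * I ≤ r → r + 1 ≤ I * P → ¬ I ∣ (r + 1) →
      (∀ m, s * I ≤ m → m ≤ r → α m ≤ 8 * q₁ * I) →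
      α (r + 1) ≤ (1 + 1 / (I : ℝ)) * α r + 4 * q₁ * I * (1 / I) := by
    intro r hsr hrP hdvd history
    have forcing : q₁ * P * ((1 + 1 / ((I : ℝ) * P)) ^ (min I (r - s * I)) - 1)
        * (1 + 1 / ((I : ℝ) * P)) ^ (r - (s + 1) * I) ≤ q₁ * 3 := by
      rw [mul_assoc q₁, mul_assoc q₁]
      exact mul_le_mul_of_nonneg_left
        (mul_pow_sub_one_mul_pow_le_three (min_le_left _ _) (by lia)) hq₁
    have memory : q₁ * q₂ * ∑ i ∈ range (r - s * I - 1),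
        (1 + 1 / ((I : ℝ) * P)) ^ i * α (r - 1 - i) ≤ q₁ :=
      calc _ ≤ q₁ * q₂ * (I * P * (3 * (8 * q₁ * I))) := by
            gcongr
            refine sum_one_add_one_div_pow_mul_le ?_ (by positivity) fun i hi =>
              history _ (by lia) (by lia)
            exact_mod_cast (by lia : r - s * I - 1 ≤ I * P)
        _ = q₁ * (24 * (q₁ * q₂) * I ^ 2 * P) := by ring
        _ ≤ q₁ := mul_le_of_le_one_right hq₁ hq
    have cancel : 4 * q₁ * I * (1 / I) = 4 * q₁ := by field_simp
    linarith [hαrec r hsr hrP hdvd]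
  induction t using Nat.strong_induction_on with
  | _ t ih =>
    have gronwall : α t ≤ 4 * q₁ * I * ((1 + 1 / (I : ℝ)) ^ (t % I) - 1) :=
      le_mul_pow_mod_sub_one_of_reset (by positivity) (dvd_mul_left I s)
        (fun r hsr hrt => hα0 r hsr (hrt.trans htP))
        (fun r hsr hrt hdvd => step r hsr (hrt.trans htP) hdvd
          fun m hsm hmr => ih m (by lia) hsm (by lia)) hst le_rfl
    have pow_le_three : (1 + 1 / (I : ℝ)) ^ (t % I) ≤ 3 :=
      one_add_one_div_pow_le_three (by exact_mod_cast (t.mod_lt hI).le)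
    calc α t ≤ 4 * q₁ * I * ((1 + 1 / (I : ℝ)) ^ (t % I) - 1) := gronwall
      _ ≤ 4 * q₁ * I * (3 - 1) := by gcongr
      _ = 8 * q₁ * I := by ring

lemma memory_coefficient_le_one_of_step_size_le {h : ℝ} {I P : ℕ} (hh : 0 ≤ h)
    (hle : h * I * P ≤ 1 / 9) :
    24 * (18 * h ^ 2 * I * (15 * h ^ 2 * I * P)) * I ^ 2 * P ≤ 1 := by
  have hP : (P : ℝ) ^ 2 ≤ (P : ℝ) ^ 4 := by
    have : P ^ 2 ≤ (P ^ 2) ^ 2 := Nat.le_self_pow two_ne_zero (P ^ 2)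
    rw [← pow_mul] at this
    exact_mod_cast this
  calc 24 * (18 * h ^ 2 * I * (15 * h ^ 2 * I * P)) * I ^ 2 * P
      = 6480 * (h * I) ^ 4 * (P : ℝ) ^ 2 := by ring
    _ ≤ 6480 * (h * I) ^ 4 * (P : ℝ) ^ 4 := by gcongr
    _ = 6480 * (h * I * P) ^ 4 := by ring
    _ ≤ 6480 * (1 / 9) ^ 4 := by gcongr
    _ ≤ 1 := by norm_num

/-- Bound on the auxiliary coefficients `α_{s,t}` from the proof of Lemma 1
(Amplified SCAFFOLD).  Here `j(s,t) = min I (t - s*I)` and `ℓ(s,t) = t - (s+1)*I`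
(truncated subtraction on ℕ realizes `max{0, ·}`). -/
theorem alpha_coefficient_bound
    (I P : ℕ) (hI : 0 < I) (hP : 0 < P)
    (η L : ℝ) (hη : 0 < η) (hL : 0 < L)
    (hηle : η ≤ 1 / (60 * L * I * P))
    (q₁ q₂ : ℝ)
    (hq₁ : q₁ = 18 * η ^ 2 * L ^ 2 * I)
    (hq₂ : q₂ = 15 * η ^ 2 * L ^ 2 * I * P)
    (s : ℕ) (hs : s < P)
    (α : ℕ → ℝ)
    (hα0 : ∀ t, s * I ≤ t → t ≤ I * P → I ∣ t → α t = 0)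
    (hαrec : ∀ t, s * I ≤ t → t + 1 ≤ I * P → ¬ I ∣ (t + 1) →
      α (t + 1) = (1 + 1 / (I : ℝ)) * α t
        + q₁ * P * ((1 + 1 / ((I : ℝ) * P)) ^ (min I (t - s * I)) - 1)
            * (1 + 1 / ((I : ℝ) * P)) ^ (t - (s + 1) * I)
        + q₁ * q₂ * ∑ i ∈ Finset.range (t - s * I - 1),
            (1 + 1 / ((I : ℝ) * P)) ^ i * α (t - 1 - i)) :
    ∀ t, s * I ≤ t → t ≤ I * P → α t ≤ 36 * q₁ * I * P := by
  intro t hst htP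
  have hP1 : (1 : ℝ) ≤ P := by exact_mod_cast hP
  have step_size : η * L * I * P ≤ 1 / 9 := by
    rw [le_div_iff₀ (by positivity)] at hηle
    linarith
  have small : 24 * (q₁ * q₂) * I ^ 2 * P ≤ 1 := by
    simpa only [hq₁, hq₂, mul_pow, ← mul_assoc] using
      memory_coefficient_le_one_of_step_size_le (mul_pos hη hL).le step_size
  have hq₁0 : 0 ≤ q₁ := by rw [hq₁]; positivity
  have hq₂0 : 0 ≤ q₂ := by rw [hq₂]; positivity
  calc α t ≤ 8 * q₁ * I :=
        alpha_coefficient_bound_general hI hq₁0 hq₂0 small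
          (fun r hsr hrP hdvd => (hα0 r hsr hrP hdvd).le)
          (fun r hsr hrP hdvd => (hαrec r hsr hrP hdvd).le) hst htP
    _ ≤ 36 * q₁ * I := by gcongr; norm_num
    _ ≤ 36 * q₁ * I * P := le_mul_of_one_le_right (by positivity) hP1
end
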